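/- Fix a strongly connected directed weighted graph G = (V, E, W) with n nodes, a stationary distribution π > 0, and ε > 0 such that P^ε_{G,π} is nonempty, and let c > 0 and λ_max ∈ (0,1) be constants such that F_k(i,i) ≤ c·λ_max^k for all P ∈ P^ε_{G,π}, all states i and all k ∈ ℤ_{>0}. If the truncation accuracy η ∈ (0,1) satisfies η ≤ w_max·log λ_max / ( π_min·(log λ_max − log c − 1) ), then for every P ∈ P^ε_{G,π}, 0 ≤ J(P) − J_trunc,η(P) ≤ c·log(1/λ_max)/(1 − λ_max)² · (1 + N_η)·λ_max^{N_η}, where N_η = ⌈w_max/(η·π_min)⌉ − 1. -/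

import Mathlib

open scoped BigOperators
open Real

/-- The set of Markov chains `ε`-conforming to a directed graph with adjacency
relation `Adj` and stationary distribution `pivec`. -/
def Conf {n : ℕ} (Adj : Fin n → Fin n → Prop) (pivec : Fin n → ℝ) (ε : ℝ) :
    Set (Matrix (Fin n) (Fin n) ℝ) :=
  {P | (∀ i j, Adj i j → ε ≤ P i j) ∧ (∀ i j, ¬ Adj i j → P i j = 0) ∧
    (∀ i, ∑ j, P i j = 1) ∧ (∀ j, ∑ i, pivec i * P i j = pivec j)}

/-- The first hitting time probabilities `F_k(i,j)` for a chain `P` with travel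
times `W`: `F_k(i,j) = p_{ij}·1{k = w_{ij}} + Σ_{h≠j} p_{ih} F_{k−w_{ih}}(h,j)`
for `k ≥ 1`, and `F_k = 0` for `k ≤ 0`. -/
def IsHittingProb {n : ℕ} (P : Matrix (Fin n) (Fin n) ℝ)
    (W : Matrix (Fin n) (Fin n) ℕ) (F : ℤ → Fin n → Fin n → ℝ) : Prop :=
  (∀ k : ℤ, k ≤ 0 → ∀ i j, F k i j = 0) ∧
    ∀ k : ℤ, 1 ≤ k → ∀ i j,
      F k i j = (if k = (W i j : ℤ) then P i j else 0) +
        ∑ h : Fin n, if h = j then 0 else P i h * F (k - (W i h : ℤ)) h j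

/-!
The condition on `η` gives `F_k(i,i) ≤ c λ^k ≤ 1/e` for all `k > N`. As `x ↦ -x log x` increases on
`[0, 1/e]`, the discarded entropy is at most the arithmetico-geometric sum
`∑_{k > N} -cλ^k log (cλ^k)`, whose closed form is dominated by the claimed bound if `-log c ≤ N`.

That last inequality says that `c` cannot be too small. By Kac's inequality, the mean return time to
`j` is at most `w_max / π_j < N + 1`, while a positive integer-valued time whose point probabilities
are at most `c` has mean at least `(1/c + 1) / 2`. Hence `1/c < 2N + 1 ≤ e^N` when `N ≥ 2`. When
`N ≤ 1`, the bound `w_max < 2 π_min` forces a mean return time of at most `1`, so `c ≥ 1`.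
-/

section NegMulLog

theorem negMulLog_monotoneOn : MonotoneOn negMulLog (Set.Icc 0 (exp (-1))) := by
  rw [negMulLog_eq_neg]
  exact mul_log_strictAntiOn.antitoneOn.neg

theorem hasSum_negMulLog_mul_geometric (a : ℝ) {r : ℝ} (hr : |r| < 1) :
    HasSum (fun k : ℕ => negMulLog (a * r ^ k))
      (negMulLog a / (1 - r) + a * (-log r) * (r / (1 - r) ^ 2)) := by
  have term_eq : ∀ k : ℕ,
      negMulLog (a * r ^ k) = negMulLog a * r ^ k + a * (-log r) * (k * r ^ k) := fun k => by
    rw [negMulLog_mul, negMulLog, negMulLog, log_pow]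
    ring
  have h_geom := (hasSum_geometric_of_abs_lt_one hr).mul_left (negMulLog a)
  have h_arith := (hasSum_coe_mul_geometric_of_norm_lt_one hr).mul_left (a * (-log r))
  simpa only [term_eq, div_eq_mul_inv (negMulLog a)] using h_geom.add h_arith

variable {f : ℕ → ℝ} {a r : ℝ}

theorem negMulLog_mem_Icc_of_le_geometric (hr : r ∈ Set.Ico 0 1) (ha : a ≤ exp (-1))
    (hf0 : ∀ k, 0 ≤ f k) (hf : ∀ k, f k ≤ a * r ^ k) (k : ℕ) :
    negMulLog (f k) ∈ Set.Icc 0 (negMulLog (a * r ^ k)) := by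
  have ha0 : 0 ≤ a := by simpa using (hf0 0).trans (hf 0)
  have h_geom : a * r ^ k ≤ exp (-1) :=
    (mul_le_of_le_one_right ha0 (pow_le_one₀ hr.1 hr.2.le)).trans ha
  have h_exp : f k ≤ exp (-1) := (hf k).trans h_geom
  exact ⟨negMulLog_nonneg (hf0 k) (h_exp.trans (exp_le_one_iff.2 (by norm_num))),
    negMulLog_monotoneOn ⟨hf0 k, h_exp⟩ ⟨(hf0 k).trans (hf k), h_geom⟩ (hf k)⟩

theorem summable_negMulLog_of_le_geometric (hr : r ∈ Set.Ico 0 1) (ha : a ≤ exp (-1))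
    (hf0 : ∀ k, 0 ≤ f k) (hf : ∀ k, f k ≤ a * r ^ k) :
    Summable fun k => negMulLog (f k) :=
  have h := negMulLog_mem_Icc_of_le_geometric hr ha hf0 hf
  .of_nonneg_of_le (fun k => (h k).1) (fun k => (h k).2)
    (hasSum_negMulLog_mul_geometric a ((abs_of_nonneg hr.1).trans_lt hr.2)).summable

theorem tsum_negMulLog_le_of_le_geometric (hr : r ∈ Set.Ico 0 1) (ha : a ≤ exp (-1))
    (hf0 : ∀ k, 0 ≤ f k) (hf : ∀ k, f k ≤ a * r ^ k) :
    ∑' k, negMulLog (f k) ≤ negMulLog a / (1 - r) + a * (-log r) * (r / (1 - r) ^ 2) :=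
  have h := negMulLog_mem_Icc_of_le_geometric hr ha hf0 hf
  hasSum_le (fun k => (h k).2) (summable_negMulLog_of_le_geometric hr ha hf0 hf).hasSum
    (hasSum_negMulLog_mul_geometric a ((abs_of_nonneg hr.1).trans_lt hr.2))

theorem negMulLog_geometric_tail_le {c : ℝ} (hr : r ∈ Set.Ioo 0 1) (hc : 0 < c) {N : ℕ}
    (hcN : -log c ≤ N) :
    negMulLog (c * r ^ (N + 1)) / (1 - r) + c * r ^ (N + 1) * (-log r) * (r / (1 - r) ^ 2) ≤
      c * log (1 / r) / (1 - r) ^ 2 * ((1 + (N : ℝ)) * r ^ N) := by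
  obtain ⟨hr0, hr1⟩ := hr
  have h1r : 0 < 1 - r := sub_pos.2 hr1
  set l := -log r with hl
  have hl1 : 1 - r ≤ l := by linarith [log_le_sub_one_of_pos hr0]
  have core : r * ((-log c + (N + 1) * l) * (1 - r) + l * r) ≤ l * (1 + N) := by
    have h_log_c : r * (1 - r) * (-log c) ≤ r * (1 - r) * N := by gcongr
    have h_slope : r * N * (1 - r) ≤ r * N * l := by gcongr
    have h_slack : 0 ≤ l * (N * (1 - r) ^ 2 + (1 - r)) := by
      have : 0 ≤ l := h1r.le.trans hl1
      positivity
    linarith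
  calc _ = c * r ^ N / (1 - r) ^ 2 * (r * ((-log c + (N + 1) * l) * (1 - r) + l * r)) := by
        rw [negMulLog, log_mul hc.ne' (by positivity), log_pow, hl]
        field_simp
        push_cast
        ring
    _ ≤ c * r ^ N / (1 - r) ^ 2 * (l * (1 + N)) := by gcongr
    _ = _ := by
        rw [one_div, log_inv, ← hl]
        ring

theorem tsum_add_one_sub_sum_Icc_one {g : ℕ → ℝ} {N : ℕ}
    (hg : Summable fun k => g (k + (N + 1))) :
    ∑' k, g (k + 1) - ∑ k ∈ Finset.Icc 1 N, g k = ∑' k, g (k + (N + 1)) := by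
  have hg1 : Summable fun k => g (k + 1) :=
    (summable_nat_add_iff 1).2 ((summable_nat_add_iff (N + 1)).1 hg)
  have h_range : ∑ k ∈ Finset.range N, g (k + 1) = ∑ k ∈ Finset.Icc 1 N, g k := by
    rw [Finset.range_eq_Ico, Finset.sum_Ico_add' g 0 N 1]
    rfl
  rw [sub_eq_iff_eq_add', ← h_range]
  exact (hg1.sum_add_tsum_nat_add N).symm

end NegMulLog

section MeanLowerBound

theorem half_one_div_add_one_le_sum_one_sub {G : ℕ → ℝ} {c : ℝ} (hc : 0 < c)
    (hG : ∀ k : ℕ, G k ≤ c * k) :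
    (1 / c + 1) / 2 ≤ ∑ k ∈ Finset.range ⌈1 / c⌉₊, (1 - G k) := by
  have gauss : ∀ K : ℕ, ∑ k ∈ Finset.range K, (1 - c * k) = K - c * (K * (K - 1)) / 2 := by
    intro K
    induction K with
    | zero => simp
    | succ K ih =>
      rw [Finset.sum_range_succ, ih]
      push_cast
      ring
  set K := ⌈1 / c⌉₊
  have hK : 1 / c ≤ K := Nat.le_ceil _
  have hK' : K ≤ 1 / c + 1 := (Nat.ceil_lt_add_one (by positivity)).le
  -- `K - c * (K * (K - 1)) / 2` is concave in `K`, with value `(1 / c + 1) / 2` at both ends of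
  -- `[1 / c, 1 / c + 1]`.
  calc (1 / c + 1) / 2 ≤ (1 / c + 1) / 2 + c / 2 * ((K - 1 / c) * (1 / c + 1 - K)) :=
        le_add_of_nonneg_right
          (mul_nonneg (by positivity) (mul_nonneg (sub_nonneg.2 hK) (sub_nonneg.2 hK')))
    _ = K - c * (K * (K - 1)) / 2 := by
        field_simp
        ring
    _ = ∑ k ∈ Finset.range K, (1 - c * k) := (gauss K).symm
    _ ≤ ∑ k ∈ Finset.range K, (1 - G k) := Finset.sum_le_sum fun k _ => by linarith [hG k]

theorem sum_range_add_sub_le {B : ℕ → ℝ} (hB0 : ∀ k, 0 ≤ B k) (hB1 : ∀ k, B k ≤ 1) (K w : ℕ) :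
    ∑ k ∈ Finset.range K, (B (k + w) - B k) ≤ w := by
  have h_left : ∑ k ∈ Finset.range (w + K), B k =
      ∑ k ∈ Finset.range w, B k + ∑ k ∈ Finset.range K, B (k + w) := by
    rw [Finset.sum_range_add]
    simp only [Nat.add_comm w]
  have h_right : ∑ k ∈ Finset.range (w + K), B k =
      ∑ k ∈ Finset.range K, B k + ∑ k ∈ Finset.range w, B (K + k) := by
    rw [Nat.add_comm, Finset.sum_range_add]
  have h_nonneg : 0 ≤ ∑ k ∈ Finset.range w, B k := Finset.sum_nonneg fun k _ => hB0 k
  have h_le : ∑ k ∈ Finset.range w, B (K + k) ≤ w := by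
    simpa using Finset.sum_le_card_nsmul (Finset.range w) _ 1 fun k _ => hB1 (K + k)
  rw [Finset.sum_sub_distrib]
  linarith

end MeanLowerBound

theorem natCast_le_of_lt_two_mul {ι : Type*} [Fintype ι] {p : ι → ℝ} (hsum : ∑ i, p i = 1)
    {pmin : ℝ} (hpmin : ∀ i, pmin ≤ p i) (hpmin0 : 0 ≤ pmin) {w : ℕ} (hw : w < 2 * pmin) (j : ι) :
    w ≤ p j := by
  rcases subsingleton_or_nontrivial ι with _ | _
  · have hpj : p j = 1 := by rwa [Fintype.sum_subsingleton _ j] at hsum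
    have hw2 : w < 2 := by
      have : (w : ℝ) < 2 := by linarith [hpmin j]
      exact_mod_cast this
    rw [hpj]
    exact_mod_cast Nat.le_of_lt_succ hw2
  · obtain ⟨i, hij⟩ := exists_ne j
    have h_two : p i + p j ≤ 1 :=
      hsum ▸ Finset.add_le_sum (fun k _ => hpmin0.trans (hpmin k)) (Finset.mem_univ i)
        (Finset.mem_univ j) hij
    have hw1 : w < 1 := by
      have : (w : ℝ) < 1 := by linarith [hpmin i, hpmin j]
      exact_mod_cast this
    rw [Nat.lt_one_iff.1 hw1, Nat.cast_zero]
    exact hpmin0.trans (hpmin j)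

theorem two_mul_add_one_le_exp {x : ℝ} (hx : 2 ≤ x) : 2 * x + 1 ≤ exp x := by
  have h_quadratic : 1 + x + x ^ 2 / 2 ≤ exp x := quadratic_le_exp_of_nonneg (by linarith)
  nlinarith

theorem neg_log_le_of_one_le_mul_exp {c x : ℝ} (hc : 0 < c) (h : 1 ≤ c * exp x) :
    -log c ≤ x := by
  have h_log := log_nonneg h
  rw [log_mul hc.ne' (exp_ne_zero x), log_exp] at h_log
  linarith

/-- The distribution function `∑_{1 ≤ m ≤ k} F_m(i,j)` of the hitting time of `j` from `i`. The
argument `k` ranges over `ℤ`, as for `F` itself, so that shifting by a travel time never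
truncates. -/
noncomputable def hittingCDF {n : ℕ} (F : ℤ → Fin n → Fin n → ℝ) (k : ℤ) (i j : Fin n) : ℝ :=
  ∑ m ∈ Finset.Icc 1 k, F m i j

namespace IsHittingProb

variable {n : ℕ} {P : Matrix (Fin n) (Fin n) ℝ} {W : Matrix (Fin n) (Fin n) ℕ}
  {F : ℤ → Fin n → Fin n → ℝ}

theorem nonneg (hF : IsHittingProb P W F) (hP : ∀ i j, 0 ≤ P i j)
    (hW : ∀ i j, P i j ≠ 0 → 0 < W i j) (k : ℤ) (i j : Fin n) : 0 ≤ F k i j := by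
  by_cases hk : k ≤ 0
  · exact (hF.1 k hk i j).ge
  rw [hF.2 k (by lia) i j]
  refine add_nonneg (ite_nonneg (hP i j) le_rfl) (Finset.sum_nonneg fun h _ => ?_)
  refine ite_nonneg le_rfl ?_
  by_cases hPh : P i h = 0
  · simp only [hPh, zero_mul, le_refl]
  · have := hW i h hPh
    exact mul_nonneg (hP i h) (nonneg hF hP hW (k - W i h) h j)
termination_by k.toNat
decreasing_by lia

theorem eq_sum_mul_ite (hF : IsHittingProb P W F) {k : ℤ} (hk : 1 ≤ k) (i j : Fin n) :
    F k i j = ∑ h, P i h * if h = j then (if k = W i h then 1 else 0) else F (k - W i h) h j := by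
  have h_direct : (if k = (W i j : ℤ) then P i j else 0) =
      ∑ h, if h = j then P i h * (if k = W i h then 1 else 0) else 0 := by simp
  rw [hF.2 k hk i j, h_direct, ← Finset.sum_add_distrib]
  refine Finset.sum_congr rfl fun h _ => ?_
  split_ifs <;> simp

theorem sum_Icc_sub (hF : IsHittingProb P W F) (k : ℤ) (w : ℕ) (i j : Fin n) :
    ∑ m ∈ Finset.Icc 1 k, F (m - w) i j = hittingCDF F (k - w) i j := by
  have h_shift : ∑ m ∈ Finset.Icc 1 k, F (m - w) i j =
      ∑ m ∈ Finset.Icc (1 - (w : ℤ)) (k - w), F m i j := by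
    simp only [sub_eq_add_neg, ← Finset.map_add_right_Icc, Finset.sum_map, addRightEmbedding_apply]
  rw [h_shift, hittingCDF]
  refine (Finset.sum_subset (Finset.Icc_subset_Icc_left (by lia)) fun m hm hm' => ?_).symm
  rw [Finset.mem_Icc] at hm hm'
  exact hF.1 m (by lia) i j

theorem hittingCDF_eq_sum (hF : IsHittingProb P W F) (hW : ∀ i j, P i j ≠ 0 → 0 < W i j)
    (k : ℤ) (i j : Fin n) :
    hittingCDF F k i j = ∑ h, P i h *
      if h = j then (if W i h ≤ k then 1 else 0) else hittingCDF F (k - W i h) h j := by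
  rw [hittingCDF, Finset.sum_congr rfl fun m hm => hF.eq_sum_mul_ite (Finset.mem_Icc.1 hm).1 i j,
    Finset.sum_comm]
  refine Finset.sum_congr rfl fun h _ => ?_
  rw [← Finset.mul_sum]
  by_cases hPh : P i h = 0
  · simp only [hPh, zero_mul]
  have hWh : (1 : ℤ) ≤ W i h := mod_cast hW i h hPh
  congr 1
  split_ifs with hj hk
  · rw [Finset.sum_ite_eq', if_pos (Finset.mem_Icc.2 ⟨hWh, hk⟩)]
  · rw [Finset.sum_ite_eq', if_neg fun hmem => hk (Finset.mem_Icc.1 hmem).2]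
  · exact hF.sum_Icc_sub k (W i h) h j

theorem hittingCDF_nonneg (hF : IsHittingProb P W F) (hP : ∀ i j, 0 ≤ P i j)
    (hW : ∀ i j, P i j ≠ 0 → 0 < W i j) (k : ℤ) (i j : Fin n) : 0 ≤ hittingCDF F k i j :=
  Finset.sum_nonneg fun m _ => hF.nonneg hP hW m i j

theorem hittingCDF_mono (hF : IsHittingProb P W F) (hP : ∀ i j, 0 ≤ P i j)
    (hW : ∀ i j, P i j ≠ 0 → 0 < W i j) (i j : Fin n) :
    Monotone fun k => hittingCDF F k i j := fun _ _ hkl =>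
  Finset.sum_le_sum_of_subset_of_nonneg (Finset.Icc_subset_Icc_right hkl)
    fun m _ _ => hF.nonneg hP hW m i j

theorem hittingCDF_le_one (hF : IsHittingProb P W F) (hP : P ∈ Matrix.rowStochastic ℝ (Fin n))
    (hW : ∀ i j, P i j ≠ 0 → 0 < W i j) (k : ℤ) (i j : Fin n) : hittingCDF F k i j ≤ 1 := by
  by_cases hk : k ≤ 0
  · rw [hittingCDF, Finset.Icc_eq_empty (by lia), Finset.sum_empty]
    exact zero_le_one
  rw [hF.hittingCDF_eq_sum hW]
  refine le_of_le_of_eq ?_ (Matrix.sum_row_of_mem_rowStochastic hP i)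
  refine Finset.sum_le_sum fun h _ => ?_
  by_cases hPh : P i h = 0
  · simp only [hPh, zero_mul, le_refl]
  have := hW i h hPh
  refine mul_le_of_le_one_right (Matrix.nonneg_of_mem_rowStochastic hP) ?_
  split_ifs
  · exact le_rfl
  · exact zero_le_one
  · exact hittingCDF_le_one hF hP hW (k - W i h) h j
termination_by k.toNat
decreasing_by lia

theorem hittingCDF_natCast_le {c : ℝ} {j : Fin n} (hc : ∀ k : ℕ, 1 ≤ k → F k j j ≤ c) (k : ℕ) :
    hittingCDF F k j j ≤ c * k := by
  have h_term : ∀ m ∈ Finset.Icc 1 (k : ℤ), F m j j ≤ c := fun m hm => by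
    obtain ⟨m, rfl⟩ := Int.eq_ofNat_of_zero_le (zero_le_one.trans (Finset.mem_Icc.1 hm).1)
    exact hc m (mod_cast (Finset.mem_Icc.1 hm).1)
  simpa [hittingCDF, mul_comm] using Finset.sum_le_card_nsmul _ _ c h_term

theorem le_hittingCDF_add (hF : IsHittingProb P W F) (hP : ∀ i j, 0 ≤ P i j)
    (hW : ∀ i j, P i j ≠ 0 → 0 < W i j) {w : ℕ} (hw : ∀ i j, W i j ≤ w) {k : ℤ} (hk : 0 ≤ k)
    (i j : Fin n) :
    P i j * (1 - hittingCDF F k j j) + ∑ h, P i h * hittingCDF F k h j ≤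
      hittingCDF F (k + w) i j := by
  have h_merge : P i j * (1 - hittingCDF F k j j) + ∑ h, P i h * hittingCDF F k h j =
      ∑ h, P i h * if h = j then 1 else hittingCDF F k h j := by
    rw [← Fintype.sum_ite_eq' j fun h => P i h * (1 - hittingCDF F k h j),
      ← Finset.sum_add_distrib]
    refine Finset.sum_congr rfl fun h _ => ?_
    split_ifs <;> ring
  rw [h_merge, hF.hittingCDF_eq_sum hW]
  refine Finset.sum_le_sum fun h _ => mul_le_mul_of_nonneg_left ?_ (hP i h)
  have hwh := hw i h
  split_ifs with hj hle
  · exact le_rfl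
  · exact absurd (by lia) hle
  · exact hF.hittingCDF_mono hP hW h j (show k ≤ k + w - W i h by lia)

theorem mul_one_sub_hittingCDF_le (hF : IsHittingProb P W F) (hP : ∀ i j, 0 ≤ P i j)
    (hW : ∀ i j, P i j ≠ 0 → 0 < W i j) {w : ℕ} (hw : ∀ i j, W i j ≤ w)
    {pivec : Fin n → ℝ} (hpi : ∀ i, 0 ≤ pivec i) (hst : Matrix.vecMul pivec P = pivec)
    {k : ℤ} (hk : 0 ≤ k) (j : Fin n) :
    pivec j * (1 - hittingCDF F k j j) ≤
      ∑ i, pivec i * hittingCDF F (k + w) i j - ∑ i, pivec i * hittingCDF F k i j := by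
  have h_flow : ∑ i, pivec i * ∑ h, P i h * hittingCDF F k h j =
      ∑ i, pivec i * hittingCDF F k i j := by
    have h := Matrix.dotProduct_mulVec pivec P fun h => hittingCDF F k h j
    rwa [hst] at h
  rw [le_sub_iff_add_le]
  calc pivec j * (1 - hittingCDF F k j j) + ∑ i, pivec i * hittingCDF F k i j
      = ∑ i, pivec i * P i j * (1 - hittingCDF F k j j) +
          ∑ i, pivec i * ∑ h, P i h * hittingCDF F k h j := by
        rw [h_flow, ← Finset.sum_mul]
        exact congrArg (· * _ + _) (congrFun hst j).symm
    _ = ∑ i, pivec i *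
          (P i j * (1 - hittingCDF F k j j) + ∑ h, P i h * hittingCDF F k h j) := by
        simp only [mul_add, Finset.sum_add_distrib, mul_assoc]
    _ ≤ ∑ i, pivec i * hittingCDF F (k + w) i j := by
        gcongr with i
        · exact hpi i
        · exact hF.le_hittingCDF_add hP hW hw hk i j

/-- Kac's inequality, with the mean return time to `j` written as a sum of survival
probabilities. -/
theorem mul_sum_one_sub_hittingCDF_le (hF : IsHittingProb P W F)
    (hP : P ∈ Matrix.rowStochastic ℝ (Fin n)) (hW : ∀ i j, P i j ≠ 0 → 0 < W i j)
    {w : ℕ} (hw : ∀ i j, W i j ≤ w) {pivec : Fin n → ℝ} (hpi : ∀ i, 0 ≤ pivec i)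
    (hpisum : ∑ i, pivec i = 1) (hst : Matrix.vecMul pivec P = pivec) (j : Fin n) (K : ℕ) :
    pivec j * ∑ k ∈ Finset.range K, (1 - hittingCDF F k j j) ≤ w := by
  have hP0 : ∀ i j, 0 ≤ P i j := fun _ _ => Matrix.nonneg_of_mem_rowStochastic hP
  let B : ℕ → ℝ := fun k => ∑ i, pivec i * hittingCDF F k i j
  have hB0 : ∀ k, 0 ≤ B k := fun k =>
    Finset.sum_nonneg fun i _ => mul_nonneg (hpi i) (hF.hittingCDF_nonneg hP0 hW k i j)
  have hB1 : ∀ k, B k ≤ 1 := fun k => hpisum ▸ Finset.sum_le_sum fun i _ =>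
    mul_le_of_le_one_right (hpi i) (hF.hittingCDF_le_one hP hW k i j)
  calc pivec j * ∑ k ∈ Finset.range K, (1 - hittingCDF F k j j)
      = ∑ k ∈ Finset.range K, pivec j * (1 - hittingCDF F k j j) := Finset.mul_sum ..
    _ ≤ ∑ k ∈ Finset.range K, (B (k + w) - B k) := Finset.sum_le_sum fun k _ => by
        simpa only [B, Nat.cast_add] using
          hF.mul_one_sub_hittingCDF_le hP0 hW hw hpi hst (Int.natCast_nonneg k) j
    _ ≤ w := sum_range_add_sub_le hB0 hB1 K w

theorem mul_one_add_le (hF : IsHittingProb P W F)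
    (hP : P ∈ Matrix.rowStochastic ℝ (Fin n)) (hW : ∀ i j, P i j ≠ 0 → 0 < W i j)
    {w : ℕ} (hw : ∀ i j, W i j ≤ w) {pivec : Fin n → ℝ} (hpi : ∀ i, 0 ≤ pivec i)
    (hpisum : ∑ i, pivec i = 1) (hst : Matrix.vecMul pivec P = pivec)
    {c : ℝ} (hc : 0 < c) {j : Fin n} (hFc : ∀ k : ℕ, 1 ≤ k → F k j j ≤ c) :
    pivec j * (1 + c) ≤ 2 * c * w := by
  have h_mean : pivec j * ((1 / c + 1) / 2) ≤ w :=
    (mul_le_mul_of_nonneg_left (half_one_div_add_one_le_sum_one_sub hc (hittingCDF_natCast_le hFc))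
      (hpi j)).trans (hF.mul_sum_one_sub_hittingCDF_le hP hW hw hpi hpisum hst j _)
  calc pivec j * (1 + c) = 2 * c * (pivec j * ((1 / c + 1) / 2)) := by field_simp
    _ ≤ 2 * c * w := by gcongr

theorem neg_log_le (hF : IsHittingProb P W F)
    (hP : P ∈ Matrix.rowStochastic ℝ (Fin n)) (hW : ∀ i j, P i j ≠ 0 → 0 < W i j)
    {w : ℕ} (hw : ∀ i j, W i j ≤ w) {pivec : Fin n → ℝ}
    (hpisum : ∑ i, pivec i = 1) (hst : Matrix.vecMul pivec P = pivec) {pmin : ℝ} (hpmin0 : 0 < pmin)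
    (hpmin : ∀ i, pmin ≤ pivec i) {c : ℝ} (hc : 0 < c) {j : Fin n}
    (hFc : ∀ k : ℕ, 1 ≤ k → F k j j ≤ c) {N : ℕ} (hwN : w < (N + 1) * pmin) :
    -log c ≤ N := by
  have hpi : ∀ i, 0 < pivec i := fun i => hpmin0.trans_le (hpmin i)
  have kac := hF.mul_one_add_le hP hW hw (fun i => (hpi i).le) hpisum hst hc hFc
  rcases le_or_gt 2 N with hN | hN
  · have hwN' : (w : ℝ) < (N + 1) * pivec j :=
      hwN.trans_le (mul_le_mul_of_nonneg_left (hpmin j) (by positivity))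
    have h_mean : pivec j * (1 + c) < pivec j * (2 * c * (N + 1)) := by
      calc pivec j * (1 + c) ≤ 2 * c * w := kac
        _ < 2 * c * ((N + 1) * pivec j) := by gcongr
        _ = pivec j * (2 * c * (N + 1)) := by ring
    refine neg_log_le_of_one_le_mul_exp hc ?_
    calc 1 ≤ c * (2 * N + 1) := by linarith [lt_of_mul_lt_mul_left h_mean (hpi j).le]
      _ ≤ c * exp N := by
        gcongr
        exact two_mul_add_one_le_exp (mod_cast hN)
  · have hN1 : (N : ℝ) ≤ 1 := mod_cast Nat.le_of_lt_succ hN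
    have hw2 : (w : ℝ) < 2 * pmin :=
      hwN.trans_le (mul_le_mul_of_nonneg_right (by linarith) hpmin0.le)
    have hwj : (w : ℝ) ≤ pivec j := natCast_le_of_lt_two_mul hpisum hpmin hpmin0.le hw2 j
    have h_mean : pivec j * (1 + c) ≤ pivec j * (2 * c) := by
      calc pivec j * (1 + c) ≤ 2 * c * w := kac
        _ ≤ 2 * c * pivec j := by gcongr
        _ = pivec j * (2 * c) := mul_comm _ _
    have hc1 : 1 ≤ c := by linarith [le_of_mul_le_mul_left h_mean (hpi j)]
    exact (neg_nonpos.2 (log_nonneg hc1)).trans N.cast_nonneg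

end IsHittingProb

theorem le_succ_mul_of_ceil_div_sub_one_le {x y : ℝ} (hy : 0 < y) {N : ℕ}
    (hN : ⌈x / y⌉₊ - 1 ≤ N) : x ≤ (N + 1) * y := by
  rw [← div_le_iff₀ hy]
  exact_mod_cast (Nat.le_ceil _).trans (Nat.cast_le.2 (Nat.sub_le_iff_le_add.1 hN))

theorem mul_pow_le_exp_neg_one_of_accuracy {c lam η p w : ℝ} (hc : 0 < c)
    (hlam : lam ∈ Set.Ioo 0 1) (hη : 0 < η) (hp : 0 < p) (hw : 0 ≤ w)
    (hηcond : η ≤ w * log lam / (p * (log lam - log c - 1))) {N : ℕ}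
    (hwN : w ≤ (N + 1) * (η * p)) : c * lam ^ N ≤ exp (-1) := by
  have hlog : log lam < 0 := log_neg hlam.1 hlam.2
  have hD : log lam - log c - 1 < 0 := by
    by_contra! hD
    exact absurd (hη.trans_le hηcond) (not_lt.2
      (div_nonpos_of_nonpos_of_nonneg (mul_nonpos_of_nonneg_of_nonpos hw hlog.le)
        (mul_nonneg hp.le hD)))
  have h_scaled : (η * p) * ((N + 1) * log lam) ≤ (η * p) * (log lam - log c - 1) := by
    calc (η * p) * ((N + 1) * log lam) = (N + 1) * (η * p) * log lam := by ring
      _ ≤ w * log lam := mul_le_mul_of_nonpos_right hwN hlog.le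
      _ ≤ η * (p * (log lam - log c - 1)) :=
        (le_div_iff_of_neg (mul_neg_of_pos_of_neg hp hD)).1 hηcond
      _ = (η * p) * (log lam - log c - 1) := (mul_assoc ..).symm
  have h_log : (N + 1) * log lam ≤ log lam - log c - 1 :=
    le_of_mul_le_mul_left h_scaled (mul_pos hη hp)
  have hlamN : 0 < lam ^ N := pow_pos hlam.1 N
  rw [← log_le_iff_le_exp (mul_pos hc hlamN), log_mul hc.ne' hlamN.ne', log_pow]
  linarith

/-- The return time entropy `J(P)`, as a function of the hitting time probabilities `F` of `P`. The
sum over `k ≥ 1` is indexed by `k + 1` with `k : ℕ`. -/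
noncomputable def returnTimeEntropy {n : ℕ} (pivec : Fin n → ℝ) (F : ℤ → Fin n → Fin n → ℝ) : ℝ :=
  ∑ i, pivec i * ∑' k : ℕ, negMulLog (F ((k : ℤ) + 1) i i)

/-- The return time entropy truncated at return times at most `N`; with `N = N_η` it is the paper's
`J_trunc,η(P)`. -/
noncomputable def truncReturnTimeEntropy {n : ℕ} (pivec : Fin n → ℝ)
    (F : ℤ → Fin n → Fin n → ℝ) (N : ℕ) : ℝ :=
  ∑ i, pivec i * ∑ k ∈ Finset.Icc 1 N, negMulLog (F (k : ℤ) i i)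

section Entropy

variable {n : ℕ} {pivec : Fin n → ℝ} {F : ℤ → Fin n → Fin n → ℝ}

theorem returnTimeEntropy_sub_trunc {N : ℕ}
    (hF : ∀ i, Summable fun k : ℕ => negMulLog (F (k + (N + 1) : ℕ) i i)) :
    returnTimeEntropy pivec F - truncReturnTimeEntropy pivec F N =
      ∑ i, pivec i * ∑' k : ℕ, negMulLog (F (k + (N + 1) : ℕ) i i) := by
  rw [returnTimeEntropy, truncReturnTimeEntropy, ← Finset.sum_sub_distrib]
  refine Finset.sum_congr rfl fun i _ => ?_
  rw [← mul_sub, ← tsum_add_one_sub_sum_Icc_one (g := fun k : ℕ => negMulLog (F k i i)) (hF i)]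
  simp only [Nat.cast_add, Nat.cast_one]

theorem returnTimeEntropy_sub_trunc_mem_Icc (hpi : ∀ i, 0 ≤ pivec i) (hpisum : ∑ i, pivec i = 1)
    {c lam : ℝ} (hc : 0 < c) (hlam : lam ∈ Set.Ioo 0 1) (hF0 : ∀ (k : ℕ) i, 0 ≤ F k i i)
    {N : ℕ} (hF : ∀ i (k : ℕ), 1 ≤ k → F k i i ≤ c * lam ^ k)
    (hexp : c * lam ^ (N + 1) ≤ exp (-1)) (hcN : -log c ≤ N) :
    returnTimeEntropy pivec F - truncReturnTimeEntropy pivec F N ∈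
      Set.Icc 0 (c * log (1 / lam) / (1 - lam) ^ 2 * ((1 + (N : ℝ)) * lam ^ N)) := by
  have hlam' : lam ∈ Set.Ico 0 1 := Set.Ioo_subset_Ico_self hlam
  have hF0' : ∀ i (k : ℕ), 0 ≤ F (k + (N + 1) : ℕ) i i := fun i k => hF0 _ i
  have h_geom : ∀ i (k : ℕ), F (k + (N + 1) : ℕ) i i ≤ c * lam ^ (N + 1) * lam ^ k := fun i k => by
    rw [mul_assoc, ← pow_add, Nat.add_comm (N + 1)]
    exact hF i _ (by lia)
  rw [returnTimeEntropy_sub_trunc fun i =>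
    summable_negMulLog_of_le_geometric hlam' hexp (hF0' i) (h_geom i)]
  constructor
  · exact Finset.sum_nonneg fun i _ => mul_nonneg (hpi i) <| tsum_nonneg fun k =>
      (negMulLog_mem_Icc_of_le_geometric hlam' hexp (hF0' i) (h_geom i) k).1
  · set b := c * log (1 / lam) / (1 - lam) ^ 2 * ((1 + (N : ℝ)) * lam ^ N)
    calc _ ≤ ∑ i, pivec i * b := Finset.sum_le_sum fun i _ => mul_le_mul_of_nonneg_left
          ((tsum_negMulLog_le_of_le_geometric hlam' hexp (hF0' i) (h_geom i)).trans
            (negMulLog_geometric_tail_le hlam hc hcN)) (hpi i)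
      _ = b := by rw [← Finset.sum_mul, hpisum, one_mul]

end Entropy

section Conf

variable {n : ℕ} {Adj : Fin n → Fin n → Prop} {pivec : Fin n → ℝ} {ε : ℝ}
  {P : Matrix (Fin n) (Fin n) ℝ}

theorem Conf_subset_rowStochastic (hε : 0 ≤ ε) :
    Conf Adj pivec ε ⊆ Matrix.rowStochastic ℝ (Fin n) := by
  rintro P ⟨h_adj, h_nadj, h_row, -⟩
  refine Matrix.mem_rowStochastic_iff_sum.2 ⟨fun i j => ?_, h_row⟩
  by_cases h : Adj i j
  · exact hε.trans (h_adj i j h)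
  · exact (h_nadj i j h).ge

theorem vecMul_eq_of_mem_Conf (hP : P ∈ Conf Adj pivec ε) : Matrix.vecMul pivec P = pivec :=
  funext hP.2.2.2

theorem adj_of_mem_Conf (hP : P ∈ Conf Adj pivec ε) {i j : Fin n} (h : P i j ≠ 0) : Adj i j :=
  not_imp_comm.1 (hP.2.1 i j) h

end Conf

theorem truncation_error_bound_general {n : ℕ} {P : Matrix (Fin n) (Fin n) ℝ}
    {W : Matrix (Fin n) (Fin n) ℕ} {F : ℤ → Fin n → Fin n → ℝ} (hF : IsHittingProb P W F)
    (hP : P ∈ Matrix.rowStochastic ℝ (Fin n)) (hW : ∀ i j, P i j ≠ 0 → 0 < W i j)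
    {w : ℕ} (hw : ∀ i j, W i j ≤ w) {pivec : Fin n → ℝ}
    (hpisum : ∑ i, pivec i = 1) (hst : Matrix.vecMul pivec P = pivec) {pmin : ℝ} (hpmin0 : 0 < pmin)
    (hpmin : ∀ i, pmin ≤ pivec i) {c lam : ℝ} (hc : 0 < c) (hlam : lam ∈ Set.Ioo 0 1)
    (hbound : ∀ i (k : ℕ), 1 ≤ k → F k i i ≤ c * lam ^ k) {η : ℝ} (hη : η ∈ Set.Ioo 0 1)
    (hηcond : η ≤ w * log lam / (pmin * (log lam - log c - 1)))
    {N : ℕ} (hN : ⌈w / (η * pmin)⌉₊ - 1 ≤ N) :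
    returnTimeEntropy pivec F - truncReturnTimeEntropy pivec F N ∈
      Set.Icc 0 (c * log (1 / lam) / (1 - lam) ^ 2 * ((1 + (N : ℝ)) * lam ^ N)) := by
  obtain ⟨j, -, -⟩ := Finset.exists_ne_zero_of_sum_ne_zero (hpisum.trans_ne one_ne_zero)
  have hwN : w ≤ (N + 1) * (η * pmin) :=
    le_succ_mul_of_ceil_div_sub_one_le (mul_pos hη.1 hpmin0) hN
  have hwN' : w < (N + 1) * pmin :=
    hwN.trans_lt (mul_lt_mul_of_pos_left (mul_lt_of_lt_one_left hpmin0 hη.2) (by positivity))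
  have hpow : ∀ k, c * lam ^ k ≤ c := fun k =>
    mul_le_of_le_one_right hc.le (pow_le_one₀ hlam.1.le hlam.2.le)
  have hcN : -log c ≤ N := hF.neg_log_le hP hW hw hpisum hst hpmin0 hpmin hc (j := j)
    (fun k hk => (hbound j k hk).trans (hpow k)) hwN'
  have hexp : c * lam ^ (N + 1) ≤ exp (-1) :=
    (mul_le_mul_of_nonneg_left (pow_le_pow_of_le_one hlam.1.le hlam.2.le N.le_succ) hc.le).trans
      (mul_pow_le_exp_neg_one_of_accuracy hc hlam hη.1 hpmin0 w.cast_nonneg hηcond hwN)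
  exact returnTimeEntropy_sub_trunc_mem_Icc (fun i => hpmin0.le.trans (hpmin i)) hpisum hc hlam
    (fun k i => hF.nonneg (fun _ _ => Matrix.nonneg_of_mem_rowStochastic hP) hW k i i)
    hbound hexp hcN

/-- if `F_k(i,i) ≤ c·λ_max^k` uniformly on the `ε`-conforming
set with `c > 0`, `λ_max ∈ (0,1)`, and the truncation accuracy `η ∈ (0,1)`
satisfies `η ≤ w_max log λ_max / (π_min (log λ_max − log c − 1))`, then
`0 ≤ J(P) − J_trunc,η(P) ≤ c log(1/λ_max)/(1−λ_max)² · (1+N_η) λ_max^{N_η}`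
where `N_η = ⌈w_max/(η π_min)⌉ − 1`. -/
theorem truncation_error_bound {n : ℕ}
    (Adj : Fin n → Fin n → Prop) (W : Matrix (Fin n) (Fin n) ℕ)
    (pivec : Fin n → ℝ) (ε : ℝ)
    (hconn : ∀ i j, Relation.ReflTransGen Adj i j)
    (hW1 : ∀ i j, Adj i j → 1 ≤ W i j)
    (hW0 : ∀ i j, ¬ Adj i j → W i j = 0)
    (hpi : ∀ i, 0 < pivec i) (hpisum : ∑ i, pivec i = 1)
    (hε : 0 < ε) (hne : (Conf Adj pivec ε).Nonempty)
    (F : Matrix (Fin n) (Fin n) ℝ → ℤ → Fin n → Fin n → ℝ)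
    (hF : ∀ P ∈ Conf Adj pivec ε, IsHittingProb P W (F P))
    (c lam : ℝ) (hc : 0 < c) (hlam : lam ∈ Set.Ioo (0 : ℝ) 1)
    (hbound : ∀ P ∈ Conf Adj pivec ε, ∀ i : Fin n, ∀ k : ℕ, 1 ≤ k →
      F P (k : ℤ) i i ≤ c * lam ^ k)
    (wmax : ℕ) (hwmax : wmax = Finset.univ.sup (fun p : Fin n × Fin n => W p.1 p.2))
    (pimin : ℝ) (hpimin : IsLeast (Set.range pivec) pimin)
    (η : ℝ) (hη : η ∈ Set.Ioo (0 : ℝ) 1)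
    (hηcond : η ≤ (wmax : ℝ) * Real.log lam / (pimin * (Real.log lam - Real.log c - 1)))
    (Nη : ℕ) (hNη : Nη = ⌈(wmax : ℝ) / (η * pimin)⌉₊ - 1) :
    ∀ P ∈ Conf Adj pivec ε,
      0 ≤ (∑ i : Fin n, pivec i * ∑' k : ℕ, Real.negMulLog (F P ((k : ℤ) + 1) i i)) -
          (∑ i : Fin n, pivec i *
            ∑ k ∈ Finset.Icc 1 Nη, Real.negMulLog (F P (k : ℤ) i i)) ∧
      (∑ i : Fin n, pivec i * ∑' k : ℕ, Real.negMulLog (F P ((k : ℤ) + 1) i i)) -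
          (∑ i : Fin n, pivec i *
            ∑ k ∈ Finset.Icc 1 Nη, Real.negMulLog (F P (k : ℤ) i i)) ≤
        c * Real.log (1 / lam) / (1 - lam) ^ 2 * ((1 + (Nη : ℝ)) * lam ^ Nη) := by
  obtain ⟨⟨j, hj⟩, hmin⟩ := hpimin
  have hwle (i j : Fin n) : W i j ≤ wmax :=
    hwmax ▸ Finset.le_sup (f := fun p : Fin n × Fin n => W p.1 p.2) (Finset.mem_univ (i, j))
  exact fun P hP => truncation_error_bound_general (hF P hP) (Conf_subset_rowStochastic hε.le hP)
    (fun i j h => hW1 i j (adj_of_mem_Conf hP h)) hwle hpisum (vecMul_eq_of_mem_Conf hP)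
    (hj ▸ hpi j) (fun i => hmin ⟨i, rfl⟩) hc hlam (hbound P hP) hη hηcond hNη.ge
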